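/- Assume the curve setup with counterclockwise orientation. Then for every s ∈ ℝ: (i) ∫₀^L K(s,t) dt = −π, where K(s,t) = ((l(s) − l(t))·n(t))/‖l(s) − l(t)‖² when l(s) ≠ l(t) and K(s,t) = (1/2)·l''(s)·n(s) when l(s) = l(t) (this extension makes t ↦ K(s,t) continuous); and (ii) lim_{ε→0⁺} ∫_{{t ∈ [s − L/2, s + L/2] : |t − s| ≥ ε}} ((l(s) − l(t))·l'(t))/‖l(s) − l(t)‖² dt = 0. -/

import Mathlib

open Real MeasureTheory Filter Topology

/-- Dot product of two points of the plane `ℝ² ≃ ℂ`. -/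
noncomputable def dotR (z w : ℂ) : ℝ := z.re * w.re + z.im * w.im

/-- The unit normal vector `n(s) = (l₂'(s), -l₁'(s))` of a curve `l`. -/
noncomputable def normalv (l : ℝ → ℂ) (s : ℝ) : ℂ := -Complex.I * deriv l s

open Classical in
/-- The double layer kernel `K(s,t) = ((l(s) - l(t))·n(t))/‖l(s) - l(t)‖²`, extended
continuously through the diagonal by `(1/2)·l''(s)·n(s)`. -/
noncomputable def Kdl (l : ℝ → ℂ) (s t : ℝ) : ℝ :=
  if l s = l t then (1/2) * dotR (deriv (deriv l) s) (normalv l s)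
  else dotR (l s - l t) (normalv l t) / ‖l s - l t‖ ^ 2

structure Crv (L : ℝ) (l : ℝ → ℂ) : Prop where
  hL : 0 < L
  hsm : ContDiff ℝ (⊤ : ℕ∞) l
  hper : ∀ s, l (s + L) = l s
  harc : ∀ s, ‖deriv l s‖ = 1
  hinj : Set.InjOn l (Set.Ico 0 L)

/-- the complex Cauchy kernel -/
noncomputable def JJ (l : ℝ → ℂ) (s t : ℝ) : ℂ := deriv l t / (l t - l s)

theorem Crv.diff {L l} (h : Crv L l) : Differentiable ℝ l := h.hsm.differentiable (by simp)
theorem Crv.hd {L l} (h : Crv L l) (t : ℝ) : HasDerivAt l (deriv l t) t := (h.diff t).hasDerivAt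
theorem Crv.cont {L l} (h : Crv L l) : Continuous l := h.hsm.continuous
theorem Crv.contDiff_deriv {L l} (h : Crv L l) : ContDiff ℝ 1 (deriv l) := by
  have h2 : ContDiff ℝ (1 + 1) l := h.hsm.of_le (by
    norm_num
    exact WithTop.coe_le_coe.2 (le_top : (2 : ℕ∞) ≤ ⊤))
  exact ((contDiff_succ_iff_deriv (n := 1)).1 h2).2.2
theorem Crv.contd {L l} (h : Crv L l) : Continuous (deriv l) := h.contDiff_deriv.continuous
theorem Crv.per' {L l} (h : Crv L l) (t : ℝ) : deriv l (t + L) = deriv l t := by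
  rw [← deriv_comp_add_const]
  congr 1
  funext x
  exact h.hper x

theorem Crv.inj' {L l} (h : Crv L l) {s t : ℝ} (h1 : s < t) (h2 : t < s + L) : l t ≠ l s := by
  intro he
  have hp : Function.Periodic l L := h.hper
  have key : ∀ x, l (toIcoMod h.hL 0 x) = l x := by
    intro x
    unfold toIcoMod
    exact hp.sub_zsmul_eq _
  have hm : ∀ x, toIcoMod h.hL 0 x ∈ Set.Ico 0 L := by
    intro x
    simpa using toIcoMod_mem_Ico h.hL 0 x
  have := h.hinj (hm t) (hm s) (by rw [key, key, he])
  unfold toIcoMod at this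
  set a := toIcoDiv h.hL 0 t
  set b := toIcoDiv h.hL 0 s
  simp only [zsmul_eq_mul] at this
  have h3 : t - s = ((a - b : ℤ) : ℝ) * L := by push_cast; linarith
  have hL := h.hL
  have h4 : (0:ℝ) < ((a - b : ℤ) : ℝ) := by
    by_contra hc
    push Not at hc
    nlinarith
  have h5 : ((a - b : ℤ) : ℝ) < 1 := by
    by_contra hc
    push Not at hc
    nlinarith
  have h4' : (0:ℤ) < a - b := by exact_mod_cast h4
  have h5' : a - b < (1:ℤ) := by exact_mod_cast h5
  omega

theorem Crv.JJper {L l} (h : Crv L l) (s : ℝ) : Function.Periodic (JJ l s) L := by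
  intro t
  simp [JJ, h.per', h.hper]

/-- exponential of the integral of a logarithmic derivative -/
theorem exp_logderiv {f f' : ℝ → ℂ} {a b : ℝ} (hab : a ≤ b)
    (hf : ∀ t, HasDerivAt f (f' t) t) (hf' : Continuous f')
    (hne : ∀ t ∈ Set.Icc a b, f t ≠ 0) :
    Complex.exp (∫ t in a..b, f' t / f t) = f b / f a := by
  have hfc : Continuous f := continuous_iff_continuousAt.2 fun t => (hf t).continuousAt
  have hc : ContinuousOn (fun t => f' t / f t) (Set.Icc a b) :=
    hf'.continuousOn.div hfc.continuousOn hne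
  have hIntg : IntervalIntegrable (fun t => f' t / f t) volume a b :=
    ContinuousOn.intervalIntegrable (by rwa [Set.uIcc_of_le hab])
  set Φ : ℝ → ℂ := fun x => ∫ t in a..x, f' t / f t with hΦ
  have hΦc : ContinuousOn Φ (Set.Icc a b) := by
    have := intervalIntegral.continuousOn_primitive_interval' hIntg (Set.left_mem_uIcc)
    rwa [Set.uIcc_of_le hab] at this
  have hder : ∀ x ∈ Set.Ico a b, HasDerivWithinAt
      (fun x => f x * Complex.exp (- Φ x)) 0 (Set.Ici x) x := by
    intro x hx
    have hxI : x ∈ Set.Icc a b := ⟨hx.1, hx.2.le⟩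
    have h1 : HasDerivWithinAt Φ (f' x / f x) (Set.Ici x) x := by
      apply intervalIntegral.integral_hasDerivWithinAt_right (t := Set.Ioi x)
      · exact hIntg.mono_set (by
          rw [Set.uIcc_of_le hx.1, Set.uIcc_of_le hab]
          exact Set.Icc_subset_Icc_right hx.2.le)
      · have : Measurable (fun t => f' t / f t) := by
          exact hf'.measurable.div hfc.measurable
        exact this.stronglyMeasurable.stronglyMeasurableAtFilter
      · exact ((hf'.continuousAt).div hfc.continuousAt (hne x hxI)).continuousWithinAt
    have h2 := (hf x).hasDerivWithinAt (s := Set.Ici x) |>.mul (h1.neg.cexp)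
    refine h2.congr_deriv ?_
    have e : f x * (f' x / f x) = f' x := mul_div_cancel₀ _ (hne x hxI)
    change f' x * Complex.exp (-Φ x) + f x * (Complex.exp (-Φ x) * -(f' x / f x)) = (0:ℂ)
    linear_combination -Complex.exp (-Φ x) * e
  have := constant_of_has_deriv_right_zero
    (f := fun x => f x * Complex.exp (- Φ x)) (a := a) (b := b)
    (hfc.continuousOn.mul (hΦc.neg.cexp)) hder b ⟨hab, le_rfl⟩
  simp only [hΦ, intervalIntegral.integral_same, neg_zero, Complex.exp_zero, mul_one] at this
  rw [← this, Complex.exp_neg]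
  have := hne b ⟨hab, le_rfl⟩
  have := Complex.exp_ne_zero (∫ t in a..b, f' t / f t)
  field_simp

/-- difference quotient -/
noncomputable def gg (l : ℝ → ℂ) (s u : ℝ) : ℂ := ∫ θ in (0:ℝ)..1, deriv l (s + θ * u)

theorem Crv.gg_eq {L l} (h : Crv L l) (s u : ℝ) : l (s + u) - l s = u * gg l s u := by
  have h1 : ∀ θ ∈ Set.uIcc (0:ℝ) 1,
      HasDerivAt (fun θ : ℝ => l (s + θ * u)) (u * deriv l (s + θ * u)) θ := by
    intro θ _
    have h2 : HasDerivAt (fun θ : ℝ => s + θ * u) u θ := by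
      simpa using ((hasDerivAt_id θ).mul_const u).const_add s
    have := (h.hd (s + θ * u)).scomp θ h2
    simpa [Function.comp_def] using this
  have hcd := h.contd
  have := intervalIntegral.integral_eq_sub_of_hasDerivAt h1
    (Continuous.intervalIntegrable (by fun_prop) _ _)
  rw [intervalIntegral.integral_const_mul] at this
  simp only [one_mul, zero_mul, add_zero] at this
  rw [gg, this]

theorem Crv.gg_cont {L l} (h : Crv L l) : Continuous (fun p : ℝ × ℝ => gg l p.1 p.2) := by
  unfold gg
  have hcd := h.contd
  apply intervalIntegral.continuous_parametric_intervalIntegral_of_continuous'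
  fun_prop

theorem Crv.gg_zero {L l} (_h : Crv L l) (s : ℝ) : gg l s 0 = deriv l s := by
  simp [gg]

theorem Crv.gg_lower {L l} (h : Crv L l) :
    ∃ c > 0, ∀ s u, u ∈ Set.Icc (-(L/2)) (L/2) → c ≤ ‖gg l s u‖ := by
  have hL := h.hL
  have hne : ∀ s u, u ∈ Set.Icc (-(L/2)) (L/2) → gg l s u ≠ 0 := by
    intro s u hu h0
    have h1 := h.gg_eq s u
    rw [h0, mul_zero, sub_eq_zero] at h1
    rcases lt_trichotomy u 0 with hu0 | hu0 | hu0
    · exact h.inj' (s := s + u) (t := s) (by linarith) (by linarith [hu.1]) h1.symm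
    · subst hu0
      rw [h.gg_zero] at h0
      have := h.harc s
      simp [h0] at this
    · exact h.inj' (s := s) (t := s + u) (by linarith) (by linarith [hu.2]) h1
  have hK : IsCompact (Set.Icc (0:ℝ) L ×ˢ Set.Icc (-(L/2)) (L/2)) := isCompact_Icc.prod isCompact_Icc
  obtain ⟨p, hp, hmin⟩ := hK.exists_isMinOn ⟨(0, 0), by constructor <;> constructor <;> simp <;> linarith⟩
    (h.gg_cont.norm.continuousOn)
  refine ⟨‖gg l p.1 p.2‖, norm_pos_iff.2 (hne _ _ hp.2), ?_⟩
  intro s u hu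
  have hp2 : Function.Periodic (deriv l) L := h.per'
  have key : gg l (toIcoMod h.hL 0 s) u = gg l s u := by
    unfold gg toIcoMod
    congr 1
    funext θ
    rw [← hp2.sub_zsmul_eq (toIcoDiv h.hL 0 s) (x := s + θ * u)]
    congr 1
    ring
  rw [← key]
  have hm := toIcoMod_mem_Ico h.hL 0 s
  rw [zero_add] at hm
  exact hmin (show ((toIcoMod h.hL 0 s, u) : ℝ × ℝ) ∈ _ from ⟨⟨hm.1, hm.2.le⟩, hu⟩)

theorem Crv.lip {L l} (h : Crv L l) : ∃ M, 0 ≤ M ∧ ∀ x y, ‖deriv l x - deriv l y‖ ≤ M * |x - y| := by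
  have hd : Differentiable ℝ (deriv l) := h.contDiff_deriv.differentiable (by simp)
  have hc : Continuous (deriv (deriv l)) := h.contDiff_deriv.continuous_deriv le_rfl
  have hp : Function.Periodic (deriv (deriv l)) L := by
    intro t
    rw [← deriv_comp_add_const]
    congr 1
    funext x
    exact h.per' x
  obtain ⟨M, hM⟩ := (isCompact_Icc (a := (0:ℝ)) (b := L)).exists_bound_of_continuousOn hc.continuousOn
  have hM' : ∀ x, ‖deriv (deriv l) x‖ ≤ M := by
    intro x
    have hm := toIcoMod_mem_Ico h.hL 0 x
    rw [zero_add] at hm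
    have := hM _ ⟨hm.1, hm.2.le⟩
    unfold toIcoMod at this
    rwa [hp.sub_zsmul_eq] at this
  refine ⟨M, (norm_nonneg _).trans (hM' 0), fun x y => ?_⟩
  have := Convex.norm_image_sub_le_of_norm_deriv_le (f := deriv l) (s := Set.univ) (C := M)
    (fun x _ => hd x) (fun x _ => hM' x) convex_univ (Set.mem_univ y) (Set.mem_univ x)
  simpa [Real.norm_eq_abs] using this

theorem Crv.JJ_bound {L l} (h : Crv L l) :
    ∃ C, ∀ s u, u ∈ Set.Icc (-(L/2)) (L/2) → ‖(JJ l s (s + u)).im‖ ≤ C := by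
  obtain ⟨c, hc, hg⟩ := h.gg_lower
  obtain ⟨M, hM0, hM⟩ := h.lip
  have hcd := h.contd
  refine ⟨M / c, fun s u hu => ?_⟩
  by_cases hu0 : u = 0
  · subst hu0
    simp [JJ]
    positivity
  have hgc := hg s u hu
  have hgne : gg l s u ≠ 0 := norm_pos_iff.1 (hc.trans_le hgc)
  have huc : (u : ℂ) ≠ 0 := by exact_mod_cast hu0
  have e1 : JJ l s (s + u) = ((u⁻¹ : ℝ) : ℂ) + (deriv l (s + u) - gg l s u) / (u * gg l s u) := by
    unfold JJ
    rw [h.gg_eq]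
    push_cast
    field_simp
    ring
  have e2 : ‖deriv l (s + u) - gg l s u‖ ≤ M * |u| := by
    have : deriv l (s + u) - gg l s u = ∫ θ in (0:ℝ)..1, (deriv l (s + u) - deriv l (s + θ * u)) := by
      rw [intervalIntegral.integral_sub, gg]
      · simp
      · simp
      · exact Continuous.intervalIntegrable (by fun_prop) _ _
    rw [this]
    have := intervalIntegral.norm_integral_le_of_norm_le_const (a := (0:ℝ)) (b := 1) (C := M * |u|)
      (f := fun θ => (deriv l (s + u) - deriv l (s + θ * u))) (by
      intro θ hθ
      rw [Set.uIoc_of_le zero_le_one] at hθ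
      refine (hM _ _).trans ?_
      refine mul_le_mul_of_nonneg_left ?_ hM0
      have : s + u - (s + θ * u) = (1 - θ) * u := by ring
      rw [this, abs_mul, abs_of_nonneg (by linarith [hθ.2])]
      have := abs_nonneg u
      nlinarith [hθ.1])
    simpa using this
  rw [e1, Complex.add_im, Complex.ofReal_im, zero_add, Real.norm_eq_abs]
  refine (Complex.abs_im_le_norm _).trans ?_
  rw [norm_div, norm_mul, Complex.norm_real, Real.norm_eq_abs]
  have hu1 : 0 < |u| := abs_pos.2 hu0
  calc _ ≤ (M * |u|) / (|u| * c) := by gcongr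
    _ = M / c := by field_simp

theorem Crv.JJ_bound' {L l} (h : Crv L l) : ∃ C, ∀ s t, ‖(JJ l s t).im‖ ≤ C := by
  obtain ⟨C, hC⟩ := h.JJ_bound
  refine ⟨C, fun s t => ?_⟩
  have hm := toIcoMod_mem_Ico h.hL (s - L / 2) t
  have := hC s (toIcoMod h.hL (s - L / 2) t - s) ⟨by linarith [hm.1], by linarith [hm.2]⟩
  rw [add_sub_cancel] at this
  unfold toIcoMod at this
  rwa [(h.JJper s).sub_zsmul_eq] at this

theorem Crv.JJ_meas {L l} (h : Crv L l) (s : ℝ) : Measurable (JJ l s) := by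
  unfold JJ
  exact h.contd.measurable.div (h.cont.measurable.sub_const _)

theorem Crv.JJ_int {L l} (h : Crv L l) (s a b : ℝ) :
    IntervalIntegrable (fun t => (JJ l s t).im) volume a b := by
  obtain ⟨C, hC⟩ := h.JJ_bound'
  refine (intervalIntegrable_const (c := C)).mono_fun ?_ ?_
  · exact (Complex.measurable_im.comp (h.JJ_meas s)).aestronglyMeasurable
  · exact Filter.Eventually.of_forall fun t => (hC s t).trans (le_abs_self C)

/-- The total (principal value) angle seen from `l s`. -/
noncomputable def GG (L : ℝ) (l : ℝ → ℂ) (s : ℝ) : ℝ :=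
  ∫ u in (-(L/2))..(L/2), (JJ l s (s + u)).im

theorem Crv.JJim_per {L l} (h : Crv L l) (s : ℝ) :
    Function.Periodic (fun t => (JJ l s t).im) L := by
  intro t
  simp only [h.JJper s t]

theorem Crv.GG_eq {L l} (h : Crv L l) (s a : ℝ) : GG L l s = ∫ t in a..(a + L), (JJ l s t).im := by
  unfold GG
  rw [intervalIntegral.integral_comp_add_left (fun t => (JJ l s t).im) s]
  rw [show s + L / 2 = (s + -(L/2)) + L by ring]
  exact (h.JJim_per s).intervalIntegral_add_eq _ _

theorem Crv.GG_cont {L l} (h : Crv L l) : Continuous (GG L l) := by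
  obtain ⟨C, hC⟩ := h.JJ_bound'
  have hL := h.hL
  unfold GG
  apply intervalIntegral.continuous_of_dominated_interval (bound := fun _ => C)
  · intro s
    exact (Complex.measurable_im.comp ((h.JJ_meas s).comp (measurable_const_add s))).aestronglyMeasurable
  · intro s
    exact Filter.Eventually.of_forall fun u _ => hC s _
  · exact intervalIntegrable_const
  · have h0 : ∀ᵐ u : ℝ, u ≠ 0 := by
      simp [ae_iff, measure_singleton]
    filter_upwards [h0] with u hu hmem
    rw [Set.uIoc_of_le (by linarith)] at hmem
    have hc := h.cont
    have hcd := h.contd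
    unfold JJ
    refine Complex.continuous_im.comp (Continuous.div (by fun_prop) (by fun_prop) ?_)
    intro s h1
    rw [sub_eq_zero] at h1
    rcases lt_or_gt_of_ne hu with hu0 | hu0
    · exact h.inj' (s := s + u) (t := s) (by linarith) (by linarith [hmem.1]) h1.symm
    · exact h.inj' (s := s) (t := s + u) (by linarith) (by linarith [hmem.2]) h1

noncomputable def II (L : ℝ) (l : ℝ → ℂ) (s ε : ℝ) : ℂ :=
  ∫ t in (s + ε)..(s + L - ε), JJ l s t

theorem Crv.JJ_contOn {L l} (h : Crv L l) {s a b : ℝ} (ha : s < a) (hb : b < s + L) :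
    ContinuousOn (JJ l s) (Set.Icc a b) := by
  unfold JJ
  refine h.contd.continuousOn.div (h.cont.continuousOn.sub continuousOn_const) ?_
  intro t ht
  exact sub_ne_zero.2 (h.inj' (by linarith [ht.1]) (by linarith [ht.2]))

theorem Crv.JJ_intC {L l} (h : Crv L l) {s a b : ℝ} (hab : a ≤ b) (ha : s < a) (hb : b < s + L) :
    IntervalIntegrable (JJ l s) volume a b :=
  ContinuousOn.intervalIntegrable (by rw [Set.uIcc_of_le hab]; exact h.JJ_contOn ha hb)

theorem im_integral {f : ℝ → ℂ} {a b : ℝ} (hf : IntervalIntegrable f volume a b) :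
    (∫ t in a..b, f t).im = ∫ t in a..b, (f t).im :=
  (Complex.imCLM.intervalIntegral_comp_comm hf).symm

theorem re_integral {f : ℝ → ℂ} {a b : ℝ} (hf : IntervalIntegrable f volume a b) :
    (∫ t in a..b, f t).re = ∫ t in a..b, (f t).re :=
  (Complex.reCLM.intervalIntegral_comp_comm hf).symm

theorem small_ev {L : ℝ} (hL : 0 < L) : ∀ᶠ ε : ℝ in 𝓝[>] 0, 0 < ε ∧ ε < L / 2 :=
  Ioo_mem_nhdsGT (by linarith)

theorem Crv.II_im {L l} (h : Crv L l) (s : ℝ) :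
    Tendsto (fun ε => (II L l s ε).im) (𝓝[>] 0) (𝓝 (GG L l s)) := by
  have hc : Continuous (fun x => ∫ t in s..x, (JJ l s t).im) :=
    intervalIntegral.continuous_primitive (h.JJ_int s) s
  have h1 : Continuous (fun ε => (∫ t in s..(s + L - ε), (JJ l s t).im) -
      ∫ t in s..(s + ε), (JJ l s t).im) :=
    (hc.comp (by fun_prop : Continuous fun ε => s + L - ε)).sub
      (hc.comp (by fun_prop : Continuous fun ε => s + ε))
  have h2 := h1.tendsto 0
  simp only [sub_zero, add_zero, intervalIntegral.integral_same] at h2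
  rw [← h.GG_eq s s] at h2
  refine (h2.mono_left nhdsWithin_le_nhds).congr' ?_
  filter_upwards [small_ev h.hL] with ε hε
  rw [II, im_integral (h.JJ_intC (by linarith) (by linarith) (by linarith)),
    intervalIntegral.integral_interval_sub_left (h.JJ_int _ _ _) (h.JJ_int _ _ _)]

theorem Crv.slopeR {L l} (h : Crv L l) (s : ℝ) :
    Tendsto (fun ε => gg l s ε) (𝓝[>] 0) (𝓝 (deriv l s)) := by
  have h1 : Continuous (fun ε => gg l s ε) :=
    h.gg_cont.comp (by fun_prop : Continuous fun ε : ℝ => (s, ε))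
  have := h1.tendsto 0
  rw [h.gg_zero] at this
  exact this.mono_left nhdsWithin_le_nhds

theorem Crv.slopeL {L l} (h : Crv L l) (s : ℝ) :
    Tendsto (fun ε => gg l s (-ε)) (𝓝[>] 0) (𝓝 (deriv l s)) := by
  have h1 : Continuous (fun ε => gg l s (-ε)) :=
    h.gg_cont.comp (by fun_prop : Continuous fun ε : ℝ => (s, -ε))
  have := h1.tendsto 0
  rw [neg_zero, h.gg_zero] at this
  exact this.mono_left nhdsWithin_le_nhds

theorem Crv.dne {L l} (h : Crv L l) (s : ℝ) : deriv l s ≠ 0 := by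
  intro h0
  have := h.harc s
  simp [h0] at this

theorem Crv.eqL {L l} (h : Crv L l) (s ε : ℝ) : l (s + L - ε) - l s = -(ε * gg l s (-ε)) := by
  have h1 := h.gg_eq s (-ε)
  have h2 := h.hper (s + -ε)
  rw [show s + L - ε = s + -ε + L by ring, h2, h1]
  push_cast
  ring

theorem Crv.II_exp {L l} (h : Crv L l) (s : ℝ) :
    Tendsto (fun ε => Complex.exp (II L l s ε)) (𝓝[>] 0) (𝓝 (-1)) := by
  have h1 := ((h.slopeL s).div (h.slopeR s) (h.dne s)).neg
  rw [div_self (h.dne s)] at h1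
  refine h1.congr' ?_
  filter_upwards [small_ev h.hL] with ε hε
  have := exp_logderiv (f := fun t => l t - l s) (f' := deriv l) (a := s + ε) (b := s + L - ε)
    (by linarith) (fun t => (h.hd t).sub_const _) h.contd
    (fun t ht => sub_ne_zero.2 (h.inj' (by linarith [ht.1]) (by linarith [ht.2])))
  have hε0 : (ε : ℂ) ≠ 0 := by exact_mod_cast hε.1.ne'
  rw [show II L l s ε = ∫ t in (s + ε)..(s + L - ε), deriv l t / (l t - l s) from rfl, this,
    h.eqL, h.gg_eq, neg_div, mul_div_mul_left _ _ hε0]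
  rfl

theorem Crv.II_re {L l} (h : Crv L l) (s : ℝ) :
    Tendsto (fun ε => (II L l s ε).re) (𝓝[>] 0) (𝓝 0) := by
  have h1 := ((h.II_exp s).norm).log (by simp)
  simpa [Complex.norm_exp] using h1

theorem Crv.GG_exp {L l} (h : Crv L l) (s : ℝ) :
    Complex.exp (GG L l s * Complex.I) = -1 := by
  have h1 : Tendsto (fun ε => (((II L l s ε).re : ℝ) : ℂ) + (((II L l s ε).im : ℝ) : ℂ) * Complex.I)
      (𝓝[>] 0) (𝓝 (((0:ℝ):ℂ) + (GG L l s : ℂ) * Complex.I)) :=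
    ((Complex.continuous_ofReal.tendsto _).comp (h.II_re s)).add
      (((Complex.continuous_ofReal.tendsto _).comp (h.II_im s)).mul_const _)
  simp only [Complex.re_add_im, Complex.ofReal_zero, zero_add] at h1
  exact tendsto_nhds_unique ((Complex.continuous_exp.tendsto _).comp h1) (h.II_exp s)

theorem Crv.GG_const {L l} (h : Crv L l) (s s' : ℝ) : GG L l s = GG L l s' := by
  have h1 : ∀ s, ∃ n : ℤ, (n : ℝ) = (GG L l s - π) / (2 * π) := by
    intro s
    have h2 := h.GG_exp s
    rw [← Complex.exp_pi_mul_I, Complex.exp_eq_exp_iff_exists_int] at h2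
    obtain ⟨n, hn⟩ := h2
    refine ⟨n, ?_⟩
    have h3 := congrArg Complex.im hn
    simp at h3
    have := Real.pi_pos
    rw [h3]
    field_simp
    ring
  choose n hn using h1
  have hc : Continuous n := by
    rw [Int.isClosedEmbedding_coe_real.isInducing.continuous_iff]
    have : (Int.cast ∘ n : ℝ → ℝ) = fun s => (GG L l s - π) / (2 * π) := funext hn
    rw [this]
    exact (h.GG_cont.sub continuous_const).div_const _
  have h2 : n s = n s' := PreconnectedSpace.constant inferInstance hc
  have h3 := hn s
  rw [h2, hn s'] at h3
  have := Real.pi_pos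
  field_simp at h3
  linarith

theorem log_integral {f f' : ℝ → ℂ} {a b : ℝ} (hab : a ≤ b)
    (hf : ∀ t ∈ Set.Icc a b, HasDerivAt f (f' t) t)
    (hne : ∀ t ∈ Set.Icc a b, f t ∈ Complex.slitPlane)
    (hIntg : IntervalIntegrable (fun t => f' t / f t) volume a b) :
    ∫ t in a..b, f' t / f t = Complex.log (f b) - Complex.log (f a) := by
  apply intervalIntegral.integral_eq_sub_of_hasDerivAt _ hIntg
  intro t ht
  rw [Set.uIcc_of_le hab] at ht
  exact (hf t ht).clog_real (hne t ht)

theorem arg_small {z : ℂ} (hz : z.re = 0) : |Complex.arg z| ≤ π / 2 := by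
  rw [Complex.abs_arg_le_pi_div_two_iff, hz]

theorem Crv.wind {L l} (h : Crv L l) {z w : ℂ} (hz : ∀ t, l t ≠ z)
    (hw : (∫ t in (0:ℝ)..L, deriv l t / (l t - z)) = w) : ∃ s, |w.im - GG L l s| ≤ π := by
  have hL := h.hL
  -- nearest point
  obtain ⟨s, hs⟩ : ∃ s, ∀ t, ‖l s - z‖ ≤ ‖l t - z‖ := by
    have hc : Continuous fun t => ‖l t - z‖ := (h.cont.sub continuous_const).norm
    obtain ⟨s, -, hs⟩ := (isCompact_Icc (a := (0:ℝ)) (b := L)).exists_isMinOn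
      ⟨0, by simp [hL.le]⟩ hc.continuousOn
    refine ⟨s, fun t => ?_⟩
    have hm := toIcoMod_mem_Ico h.hL 0 t
    rw [zero_add] at hm
    have : ‖l s - z‖ ≤ ‖l (toIcoMod h.hL 0 t) - z‖ := hs ⟨hm.1, hm.2.le⟩
    unfold toIcoMod at this
    rwa [Function.Periodic.sub_zsmul_eq (h.hper : Function.Periodic l L)] at this
  refine ⟨s, ?_⟩
  -- orthogonality
  have horth : ((l s - z) / deriv l s).re = 0 := by
    have hre : HasDerivAt (fun t => (l t).re) (deriv l s).re s := by
      exact (Complex.reCLM.hasFDerivAt.comp_hasDerivAt s (h.hd s))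
    have him : HasDerivAt (fun t => (l t).im) (deriv l s).im s := by
      exact (Complex.imCLM.hasFDerivAt.comp_hasDerivAt s (h.hd s))
    have h1 := ((hre.sub_const z.re).pow 2).add ((him.sub_const z.im).pow 2)
    have h2 : IsLocalMin (((fun t => (l t).re - z.re) ^ 2) + ((fun t => (l t).im - z.im) ^ 2)) s := by
      refine Filter.Eventually.of_forall fun t => ?_
      have h3 := pow_le_pow_left₀ (norm_nonneg _) (hs t) 2
      rw [Complex.sq_norm, Complex.sq_norm, Complex.normSq_apply, Complex.normSq_apply] at h3
      simp only [Complex.sub_re, Complex.sub_im] at h3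
      simp only [Pi.add_apply, Pi.pow_apply]
      linarith
    have h3 := h2.hasDerivAt_eq_zero h1
    simp only [Nat.cast_ofNat, Nat.add_one_sub_one, pow_one] at h3
    rw [Complex.div_re, ← add_div]
    have : (l s - z).re * (deriv l s).re + (l s - z).im * (deriv l s).im = 0 := by
      simp only [Complex.sub_re, Complex.sub_im]
      linarith
    rw [this, zero_div]
  set f : ℝ → ℂ := fun t => (l t - z) / (l t - l s) with hf
  have hcz : Continuous fun t => deriv l t / (l t - z) :=
    h.contd.div (h.cont.sub continuous_const) (fun t => sub_ne_zero.2 (hz t))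
  have hslit : ∀ t, s < t → t < s + L → f t ∈ Complex.slitPlane := by
    intro t h1 h2
    have hne : l t - l s ≠ 0 := sub_ne_zero.2 (h.inj' h1 h2)
    by_contra hcon
    rw [Complex.mem_slitPlane_iff_not_le_zero, not_not] at hcon
    obtain ⟨hr, hi⟩ := hcon
    simp only [Complex.zero_re, Complex.zero_im] at hr hi
    set x := (f t).re
    have hfx : f t = (x : ℂ) := Complex.ext (by simp [x]) (by simpa using hi)
    have e1 : l t - z = x * (l t - l s) := by
      rw [← hfx, hf]
      field_simp
    have hx1 : (0:ℝ) < 1 - x := by linarith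
    have e2 : l s - z = ((x - 1 : ℝ) : ℂ) * (l t - l s) := by
      push_cast
      linear_combination e1
    have h3 := hs t
    rw [e1, e2, norm_mul, norm_mul, Complex.norm_real, Complex.norm_real, Real.norm_eq_abs,
      Real.norm_eq_abs, abs_of_nonpos hr, abs_of_neg (by linarith)] at h3
    have := norm_pos_iff.2 hne
    nlinarith
  set W : ℝ → ℂ := fun ε => ∫ t in (s + ε)..(s + L - ε), deriv l t / (l t - z) with hW
  have hWlim : Tendsto W (𝓝[>] 0) (𝓝 w) := by
    have hc : Continuous (fun x => ∫ t in s..x, deriv l t / (l t - z)) :=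
      intervalIntegral.continuous_primitive (fun a b => hcz.intervalIntegrable a b) s
    have h1 : Continuous (fun ε => (∫ t in s..(s + L - ε), deriv l t / (l t - z)) -
        ∫ t in s..(s + ε), deriv l t / (l t - z)) :=
      (hc.comp (by fun_prop : Continuous fun ε => s + L - ε)).sub
        (hc.comp (by fun_prop : Continuous fun ε => s + ε))
    have h2 := h1.tendsto 0
    simp only [sub_zero, add_zero, intervalIntegral.integral_same] at h2
    have hp : Function.Periodic (fun t => deriv l t / (l t - z)) L := by
      intro t
      simp only [h.per', h.hper]
    rw [hp.intervalIntegral_add_eq s 0, zero_add, hw] at h2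
    refine (h2.mono_left nhdsWithin_le_nhds).congr fun ε => ?_
    rw [intervalIntegral.integral_interval_sub_left (hcz.intervalIntegrable _ _)
      (hcz.intervalIntegrable _ _)]
  have hmain : ∀ᶠ ε : ℝ in 𝓝[>] 0, (W ε).im - (II L l s ε).im =
      Complex.arg (-((l (s + L - ε) - z) / gg l s (-ε))) -
        Complex.arg ((l (s + ε) - z) / gg l s ε) := by
    filter_upwards [small_ev h.hL] with ε hε
    have hne : ∀ t ∈ Set.Icc (s + ε) (s + L - ε), l t - l s ≠ 0 := fun t ht =>
      sub_ne_zero.2 (h.inj' (by linarith [ht.1]) (by linarith [ht.2]))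
    have hJ : IntervalIntegrable (JJ l s) volume (s + ε) (s + L - ε) :=
      h.JJ_intC (by linarith) (by linarith) (by linarith)
    have hIntg := (hcz.intervalIntegrable (μ := volume) (s + ε) (s + L - ε)).sub hJ
    set f' : ℝ → ℂ := fun t =>
      (deriv l t * (l t - l s) - (l t - z) * deriv l t) / (l t - l s) ^ 2 with hf'
    have heq : Set.EqOn (fun t => f' t / f t)
        (fun t => deriv l t / (l t - z) - JJ l s t) (Set.uIcc (s + ε) (s + L - ε)) := by
      intro t ht
      rw [Set.uIcc_of_le (by linarith)] at ht
      have h1 := hne t ht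
      have h2 := sub_ne_zero.2 (hz t)
      simp only [hf', hf, JJ]
      field_simp
    have hIntg' : IntervalIntegrable (fun t => f' t / f t) volume (s + ε) (s + L - ε) :=
      hIntg.congr (fun t ht => (heq (Set.uIoc_subset_uIcc ht)).symm)
    have h1 := log_integral (f := f) (f' := f') (by linarith)
      (fun t ht => ((h.hd t).sub_const z).div ((h.hd t).sub_const (l s)) (hne t ht))
      (fun t ht => hslit t (by linarith [ht.1]) (by linarith [ht.2])) hIntg'
    rw [intervalIntegral.integral_congr heq,
      intervalIntegral.integral_sub (hcz.intervalIntegrable _ _) hJ] at h1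
    have h2 := congrArg Complex.im h1
    rw [Complex.sub_im, Complex.sub_im, Complex.log_im, Complex.log_im] at h2
    rw [hW, II, h2]
    have hinv : 0 < ε⁻¹ := inv_pos.2 hε.1
    have a1 : f (s + L - ε) = ((ε⁻¹ : ℝ) : ℂ) * (-((l (s + L - ε) - z) / gg l s (-ε))) := by
      simp only [hf]
      rw [h.eqL, div_neg, mul_neg]
      push_cast
      rw [div_mul_eq_div_div_swap]
      field_simp
    have a2 : f (s + ε) = ((ε⁻¹ : ℝ) : ℂ) * ((l (s + ε) - z) / gg l s ε) := by
      simp only [hf]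
      rw [h.gg_eq]
      push_cast
      rw [div_mul_eq_div_div_swap]
      field_simp
    rw [a1, a2, Complex.arg_real_mul _ hinv, Complex.arg_real_mul _ hinv]
  set q := (l s - z) / deriv l s with hq
  have hq0 : q ≠ 0 := div_ne_zero (sub_ne_zero.2 (hz s)) (h.dne s)
  have hqim : q.im ≠ 0 := fun hi => hq0 (Complex.ext horth hi)
  have hlimR : Tendsto (fun ε => (l (s + ε) - z) / gg l s ε) (𝓝[>] 0) (𝓝 q) := by
    have h1 : Continuous fun ε => l (s + ε) - z :=
      (h.cont.comp (by fun_prop : Continuous fun ε => s + ε)).sub continuous_const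
    have h2 := h1.tendsto 0
    simp only [add_zero] at h2
    exact (h2.mono_left nhdsWithin_le_nhds).div (h.slopeR s) (h.dne s)
  have hlimL : Tendsto (fun ε => -((l (s + L - ε) - z) / gg l s (-ε))) (𝓝[>] 0) (𝓝 (-q)) := by
    have h1 : Continuous fun ε => l (s + L - ε) - z :=
      (h.cont.comp (by fun_prop : Continuous fun ε => s + L - ε)).sub continuous_const
    have h2 := h1.tendsto 0
    simp only [sub_zero, h.hper] at h2
    exact ((h2.mono_left nhdsWithin_le_nhds).div (h.slopeL s) (h.dne s)).neg
  have hargs := ((Complex.continuousAt_arg (x := -q) (Or.inr (by simpa using hqim))).tendsto.comp hlimL).sub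
    ((Complex.continuousAt_arg (x := q) (Or.inr hqim)).tendsto.comp hlimR)
  have hlhs := ((Complex.continuous_im.tendsto _).comp hWlim).sub (h.II_im s)
  have hfin := tendsto_nhds_unique hlhs (hargs.congr' (hmain.mono fun ε he => he.symm))
  rw [hfin]
  have b1 := abs_le.1 (arg_small (z := -q) (by simp [horth]))
  have b2 := abs_le.1 (arg_small (z := q) horth)
  rw [abs_le]
  constructor <;> linarith [b1.1, b1.2, b2.1, b2.2]

theorem Crv.far {L l} (h : Crv L l) : ∃ z, (∀ t, l t ≠ z) ∧
    (∫ t in (0:ℝ)..L, deriv l t / (l t - z)) = 0 := by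
  have hL := h.hL
  obtain ⟨M, hM⟩ := (isCompact_Icc (a := (0:ℝ)) (b := L)).exists_bound_of_continuousOn
    h.cont.continuousOn
  have hM' : ∀ t, ‖l t‖ ≤ M := by
    intro t
    have hm := toIcoMod_mem_Ico h.hL 0 t
    rw [zero_add] at hm
    have := hM _ ⟨hm.1, hm.2.le⟩
    unfold toIcoMod at this
    rwa [Function.Periodic.sub_zsmul_eq (h.hper : Function.Periodic l L)] at this
  have hpos : ∀ t, 0 < (l t - ((-(M + 1) : ℝ) : ℂ)).re := by
    intro t
    rw [Complex.sub_re, Complex.ofReal_re]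
    have := (abs_le.1 (Complex.abs_re_le_norm (l t))).1
    linarith [hM' t]
  have hne : ∀ t, l t - ((-(M + 1) : ℝ) : ℂ) ≠ 0 := by
    intro t h0
    have := hpos t
    rw [h0] at this
    simp at this
  refine ⟨((-(M + 1) : ℝ) : ℂ), fun t => sub_ne_zero.1 (hne t), ?_⟩
  rw [log_integral (f := fun t => l t - ((-(M + 1) : ℝ) : ℂ)) hL.le
    (fun t _ => (h.hd t).sub_const _) (fun t _ => Or.inl (hpos t))
    ((h.contd.div (h.cont.sub continuous_const) hne).intervalIntegrable _ _)]
  have := h.hper 0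
  rw [zero_add] at this
  rw [this, sub_self]

theorem Crv.GG_pi {L l} (h : Crv L l) (horient : ∃ z₀ : ℂ, (∀ s, l s ≠ z₀) ∧
      (∫ t in (0:ℝ)..L, deriv l t / (l t - z₀)) = 2 * (π : ℂ) * Complex.I) (s : ℝ) :
    GG L l s = π := by
  obtain ⟨z₀, hz, hw⟩ := horient
  obtain ⟨z₁, hz₁, hw₁⟩ := h.far
  obtain ⟨a, ha⟩ := h.wind hz hw
  obtain ⟨b, hb⟩ := h.wind hz₁ hw₁
  rw [h.GG_const a s, abs_le] at ha
  rw [h.GG_const b s, abs_le] at hb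
  simp at ha hb
  linarith [ha.1, ha.2, hb.1, hb.2]

theorem dot_re (a b : ℂ) : dotR (-a) b / ‖-a‖ ^ 2 = -(b / a).re := by
  rw [norm_neg, Complex.sq_norm, Complex.div_re, dotR]
  simp only [Complex.neg_re, Complex.neg_im]
  ring

theorem dot_im (a b : ℂ) : dotR (-a) (-Complex.I * b) / ‖-a‖ ^ 2 = -(b / a).im := by
  rw [norm_neg, Complex.sq_norm, Complex.div_im, dotR]
  simp
  ring

theorem Crv.K_int {L l} (h : Crv L l) (s : ℝ) : (∫ t in (0:ℝ)..L, Kdl l s t) = -GG L l s := by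
  have hL := h.hL
  have hKp : Function.Periodic (Kdl l s) L := by
    intro t
    simp only [Kdl, normalv, h.hper, h.per']
  have h1 := hKp.intervalIntegral_add_eq 0 s
  rw [zero_add] at h1
  rw [h1, h.GG_eq s s, ← intervalIntegral.integral_neg]
  apply intervalIntegral.integral_congr_ae
  have h0 : ∀ᵐ t : ℝ, t ≠ s + L := by
    simp [ae_iff, measure_singleton]
  filter_upwards [h0] with t ht hmem
  rw [Set.uIoc_of_le (by linarith)] at hmem
  have hne := h.inj' hmem.1 (lt_of_le_of_ne hmem.2 ht)
  rw [Kdl, if_neg hne.symm, normalv, ← neg_sub, dot_im, JJ]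

theorem Crv.pv {L l} (h : Crv L l) (s : ℝ) : Tendsto (fun ε : ℝ =>
          ∫ t in {t : ℝ | t ∈ Set.Icc (s - L/2) (s + L/2) ∧ ε ≤ |t - s|},
            dotR (l s - l t) (deriv l t) / ‖l s - l t‖ ^ 2)
        (𝓝[>] 0) (𝓝 0) := by
  have hL := h.hL
  have h1 := (h.II_re s).neg
  rw [neg_zero] at h1
  refine h1.congr' ?_
  filter_upwards [small_ev hL] with ε hε
  have hset : {t : ℝ | t ∈ Set.Icc (s - L/2) (s + L/2) ∧ ε ≤ |t - s|} =
      Set.Icc (s - L/2) (s - ε) ∪ Set.Icc (s + ε) (s + L/2) := by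
    ext t
    simp only [Set.mem_ofPred_eq, Set.mem_Icc, Set.mem_union, le_abs]
    constructor
    · rintro ⟨⟨a, b⟩, c | c⟩
      · right; constructor <;> linarith
      · left; constructor <;> linarith
    · rintro (⟨a, b⟩ | ⟨a, b⟩)
      · exact ⟨⟨a, by linarith⟩, Or.inr (by linarith)⟩
      · exact ⟨⟨by linarith, b⟩, Or.inl (by linarith)⟩
  have hfun : (fun t => dotR (l s - l t) (deriv l t) / ‖l s - l t‖ ^ 2) =
      fun t => -(JJ l s t).re := by
    funext t
    rw [← neg_sub, dot_re, JJ]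
  have hp : Function.Periodic (fun t => (JJ l s t).re) L := by
    intro t
    simp only [h.JJper s t]
  have hcon : ∀ a b, s < a → b < s + L → ContinuousOn (fun t => (JJ l s t).re) (Set.Icc a b) :=
    fun a b ha hb => Complex.continuous_re.comp_continuousOn (h.JJ_contOn ha hb)
  have hIntg : ∀ a b, a ≤ b → s < a → b < s + L →
      IntervalIntegrable (fun t => (JJ l s t).re) volume a b := by
    intro a b hab ha hb
    exact ContinuousOn.intervalIntegrable (by rw [Set.uIcc_of_le hab]; exact hcon a b ha hb)
  have hconL : ContinuousOn (fun t => (JJ l s t).re) (Set.Icc (s - L/2) (s - ε)) := by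
    have h2 := (hcon (s + L/2) (s + L - ε) (by linarith) (by linarith)).comp
      (f := fun t => t + L) (s := Set.Icc (s - L/2) (s - ε)) (by fun_prop)
      (fun t ht => ⟨by linarith [ht.1], by linarith [ht.2]⟩)
    exact h2.congr fun t _ => (hp t).symm
  have hconR := hcon (s + ε) (s + L/2) (by linarith) (by linarith)
  rw [hset, hfun, integral_neg, setIntegral_union ?_ measurableSet_Icc
    (hconL.integrableOn_Icc) (hconR.integrableOn_Icc)]
  · rw [integral_Icc_eq_integral_Ioc, integral_Icc_eq_integral_Ioc,
      ← intervalIntegral.integral_of_le (by linarith), ← intervalIntegral.integral_of_le (by linarith)]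
    have h3 : (∫ t in (s - L/2)..(s - ε), (JJ l s t).re) =
        ∫ t in (s + L/2)..(s + L - ε), (JJ l s t).re := by
      have := intervalIntegral.integral_comp_add_right (a := s - L/2) (b := s - ε)
        (fun t => (JJ l s t).re) L
      rw [show s - L / 2 + L = s + L/2 by ring, show s - ε + L = s + L - ε by ring] at this
      rw [← this]
      congr 1
      funext t
      exact (hp t).symm
    rw [h3, II, re_integral (h.JJ_intC (by linarith) (by linarith) (by linarith)),
      ← intervalIntegral.integral_add_adjacent_intervals
        (hIntg (s + ε) (s + L/2) (by linarith) (by linarith) (by linarith))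
        (hIntg (s + L/2) (s + L - ε) (by linarith) (by linarith) (by linarith))]
    ring
  · rw [Set.disjoint_left]
    intro t ht ht'
    linarith [ht.2, ht'.1, hε.1]

/-- The identities `A*1 = π` (total mass of the double layer kernel) and `B*1 = 0`
(principal value of the tangential kernel). -/
theorem double_layer_total_mass
    (L : ℝ) (hL : 0 < L) (l : ℝ → ℂ)
    (hsm : ContDiff ℝ (⊤ : ℕ∞) l) (hper : ∀ s, l (s + L) = l s)
    (harc : ∀ s, ‖deriv l s‖ = 1) (hinj : Set.InjOn l (Set.Ico 0 L))
    (horient : ∃ z₀ : ℂ, (∀ s, l s ≠ z₀) ∧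
      (∫ t in (0:ℝ)..L, deriv l t / (l t - z₀)) = 2 * (π : ℂ) * Complex.I) :
    ∀ s : ℝ,
      ((∫ t in (0:ℝ)..L, Kdl l s t) = -π) ∧
      Tendsto (fun ε : ℝ =>
          ∫ t in {t : ℝ | t ∈ Set.Icc (s - L/2) (s + L/2) ∧ ε ≤ |t - s|},
            dotR (l s - l t) (deriv l t) / ‖l s - l t‖ ^ 2)
        (𝓝[>] 0) (𝓝 0) := by
  have h : Crv L l := ⟨hL, hsm, hper, harc, hinj⟩
  intro s
  exact ⟨by rw [h.K_int, h.GG_pi horient], h.pv s⟩
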